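/- arXiv:1410.7727 — 3 statements merged into one kernel-verified Lean document; each statement's English description precedes it below -/
import Mathlib

section
/- Let Z be a compact metric space, g : Z → Z a continuous map, and φ : Z → ℝ^k a continuous function. Then for every extreme point v of the convex hull of rot_MZ(Z,g,φ) there exists an ergodic g-invariant Borel probability measure μ on Z with ∫ φ dμ = v; in particular, there exists a point z ∈ Z which is recurrent for g (i.e. g^{r_i}(z) → z for some sequence r_i → ∞) and whose Birkhoff average φ̂(z) exists and equals v. -/
open Filter Topology MeasureTheory

noncomputable def cocycle {Z : Type*} {k : ℕ} (g : Z → Z) (φ : Z → Fin k → ℝ) (z : Z) (r : ℕ) :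
    Fin k → ℝ := ∑ i ∈ Finset.range r, φ (g^[i] z)

/-- The Birkhoff average of `φ` along the `g`-orbit of `z` exists and equals `v`. -/
def hasAvg {Z : Type*} {k : ℕ} (g : Z → Z) (φ : Z → Fin k → ℝ) (z : Z) (v : Fin k → ℝ) : Prop :=
  Tendsto (fun r : ℕ => (r : ℝ)⁻¹ • cocycle g φ z r) atTop (nhds v)

/-- The pointwise rotation set. -/
def rotP {Z : Type*} {k : ℕ} (g : Z → Z) (φ : Z → Fin k → ℝ) : Set (Fin k → ℝ) :=
  {v | ∃ z, hasAvg g φ z v}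

/-- The pointwise rotation set of points in a subset `W`. -/
def rotPOn {Z : Type*} {k : ℕ} (g : Z → Z) (φ : Z → Fin k → ℝ) (W : Set Z) : Set (Fin k → ℝ) :=
  {v | ∃ z ∈ W, hasAvg g φ z v}

/-- The Misiurewicz–Ziemian rotation set. -/
def rotMZ {Z : Type*} {k : ℕ} (g : Z → Z) (φ : Z → Fin k → ℝ) : Set (Fin k → ℝ) :=
  {v | ∃ (z : ℕ → Z) (r : ℕ → ℕ), Tendsto r atTop atTop ∧
    Tendsto (fun i => (r i : ℝ)⁻¹ • cocycle g φ (z i) (r i)) atTop (nhds v)}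

/-- The measure rotation set. -/
def rotM {Z : Type*} [MeasurableSpace Z] {k : ℕ} (g : Z → Z) (φ : Z → Fin k → ℝ) :
    Set (Fin k → ℝ) :=
  {v | ∃ μ : Measure Z, IsProbabilityMeasure μ ∧ MeasurePreserving g μ μ ∧ (∫ z, φ z ∂μ) = v}

/-- The set of recurrent points of `g`. -/
def RecSet {Z : Type*} [TopologicalSpace Z] (g : Z → Z) : Set Z :=
  {z | ∃ r : ℕ → ℕ, Tendsto r atTop atTop ∧ Tendsto (fun i => g^[r i] z) atTop (nhds z)}

/-!
Every weak-* limit of the uniform measures on longer and longer orbit segments is invariant, so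
`rotMZ ⊆ rotM`. Conversely, integrating against an invariant measure does not distinguish `φ` from
its Birkhoff averages, which are uniformly close to the compact set `rotMZ`, so
`rotM ⊆ convexHull rotMZ`. Hence an extreme point `v` of this hull is an extreme point of `rotM`,
and the invariant measures with rotation vector `v` form a nonempty compact face of the convex set
of invariant probability measures. By Krein–Milman the face has an extreme point; it is extreme
among all invariant measures and therefore ergodic. Almost every point is recurrent by Poincaré's
theorem and has Birkhoff average `v` by Birkhoff's theorem.
-/

theorem tendsto_nhds_iff_forall_coord {ι α E : Type*} [Finite ι] [AddCommGroup E] [Module ℝ E]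
    [TopologicalSpace E] [IsTopologicalAddGroup E] [ContinuousSMul ℝ E] [T2Space E]
    (b : Module.Basis ι ℝ E) {l : Filter α} {u : α → E} {x : E} :
    Tendsto u l (𝓝 x) ↔ ∀ i, Tendsto (fun a => b.coord i (u a)) l (𝓝 (b.coord i x)) := by
  have : Fintype ι := Fintype.ofFinite ι
  rw [b.equivFunL.toHomeomorph.isInducing.tendsto_nhds_iff, tendsto_pi_nhds]
  rfl

section ConvexHull

variable {E : Type*} [AddCommGroup E] [Module ℝ E] [FiniteDimensional ℝ E]

theorem convexHull_eq_iUnion_image_stdSimplex (S : Set E) :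
    convexHull ℝ S = ⋃ n ∈ Set.Iic (Module.finrank ℝ E + 1),
      (fun p : (Fin n → ℝ) × (Fin n → E) => ∑ i, p.1 i • p.2 i) ''
        (stdSimplex ℝ (Fin n) ×ˢ Set.univ.pi fun _ => S) := by
  refine Set.Subset.antisymm (fun x hx => ?_) (Set.iUnion₂_subset fun n _ => ?_)
  · obtain ⟨ι, _, z, w, hzS, hz, hw, hw_sum, rfl⟩ := eq_pos_convex_span_of_mem_convexHull hx
    have card_le : Fintype.card ι ≤ Module.finrank ℝ E + 1 :=
      hz.card_le_finrank_succ.trans (Nat.succ_le_succ (Submodule.finrank_le _))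
    let e := (Fintype.equivFin ι).symm
    refine Set.mem_biUnion card_le ⟨(w ∘ e, z ∘ e), ⟨⟨fun i => (hw _).le, ?_⟩, fun i _ => ?_⟩, ?_⟩
    · exact (e.sum_comp w).trans hw_sum
    · exact hzS (Set.mem_range_self _)
    · exact e.sum_comp fun i => w i • z i
  · rintro _ ⟨⟨w, z⟩, ⟨⟨hw, hw_sum⟩, hz⟩, rfl⟩
    exact (convex_convexHull ℝ S).sum_mem (fun i _ => hw i) hw_sum fun i _ =>
      subset_convexHull ℝ S (hz i trivial)

theorem isCompact_convexHull [TopologicalSpace E] [ContinuousAdd E] [ContinuousSMul ℝ E]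
    {S : Set E} (hS : IsCompact S) : IsCompact (convexHull ℝ S) := by
  rw [convexHull_eq_iUnion_image_stdSimplex]
  exact (Set.finite_Iic _).isCompact_biUnion fun n _ =>
    ((isCompact_stdSimplex ℝ (Fin n)).prod (isCompact_univ_pi fun _ => hS)).image (by fun_prop)

end ConvexHull

theorem openSegment_ennreal_subset_nnreal {M : Type*} [AddCommMonoid M] [Module ENNReal M]
    {x y : M} : openSegment ENNReal x y ⊆ openSegment NNReal x y := by
  rintro _ ⟨a, b, ha, hb, hab, rfl⟩
  obtain ⟨ha', hb'⟩ := ENNReal.add_ne_top.1 (hab ▸ ENNReal.one_ne_top)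
  lift a to NNReal using ha'
  lift b to NNReal using hb'
  exact ⟨a, b, mod_cast ha, mod_cast hb, mod_cast hab, rfl⟩

section BirkhoffAverage

variable {Z E : Type*} [NormedAddCommGroup E] [NormedSpace ℝ E] {g : Z → Z} {f : Z → E}

theorem birkhoffAverage_comp_self (n : ℕ) (z : Z) :
    birkhoffAverage ℝ g (f ∘ g) n z = birkhoffAverage ℝ g f n (g z) := by
  simp only [birkhoffAverage, birkhoffSum, Function.comp_apply, ← Function.iterate_succ_apply,
    Function.iterate_succ_apply']

theorem norm_birkhoffAverage_le {C : ℝ} (hf : ∀ z, ‖f z‖ ≤ C) (n : ℕ) (z : Z) :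
    ‖birkhoffAverage ℝ g f n z‖ ≤ C := by
  rcases eq_or_ne n 0 with rfl | hn
  · simpa using (norm_nonneg _).trans (hf z)
  have norm_sum_le : ‖birkhoffSum g f n z‖ ≤ n * C := by
    simpa [birkhoffSum] using norm_sum_le_of_le (Finset.range n) fun i _ => hf (g^[i] z)
  rw [birkhoffAverage, norm_smul, norm_inv, RCLike.norm_natCast]
  rwa [inv_mul_le_iff₀ (by positivity)]

theorem exists_isCompact_forall_birkhoffAverage_mem [ProperSpace E] [TopologicalSpace Z]
    [CompactSpace Z] (hf : Continuous f) :
    ∃ K, IsCompact K ∧ ∀ n z, birkhoffAverage ℝ g f n z ∈ K := by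
  obtain ⟨C, hC⟩ := isCompact_univ.exists_bound_of_continuousOn hf.continuousOn
  exact ⟨_, isCompact_closedBall 0 C, fun n z =>
    mem_closedBall_zero_iff.2 (norm_birkhoffAverage_le (fun z => hC z trivial) n z)⟩

end BirkhoffAverage

section BirkhoffSum

variable {Z : Type*} (g : Z → Z) (f : Z → ℝ)

/-- The largest of the Birkhoff sums `S₀ = 0, S₁, …, Sₙ` at a point, the object controlled by the
maximal ergodic theorem. -/
noncomputable def maxBirkhoffSum (n : ℕ) (z : Z) : ℝ :=
  partialSups (birkhoffSum g f · z) n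

theorem monotone_maxBirkhoffSum (z : Z) : Monotone (maxBirkhoffSum g f · z) :=
  (partialSups (birkhoffSum g f · z)).monotone

theorem maxBirkhoffSum_nonneg (n : ℕ) (z : Z) : 0 ≤ maxBirkhoffSum g f n z := by
  simpa [maxBirkhoffSum] using monotone_maxBirkhoffSum g f z n.zero_le

theorem maxBirkhoffSum_zero : maxBirkhoffSum g f 0 = 0 := by
  ext z
  simp [maxBirkhoffSum]

theorem maxBirkhoffSum_succ (n : ℕ) (z : Z) :
    maxBirkhoffSum g f (n + 1) z = max 0 (f z + maxBirkhoffSum g f n (g z)) := by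
  simp only [maxBirkhoffSum, partialSups_add_one', Function.comp_def, bot_eq_zero,
    birkhoffSum_zero, birkhoffSum_succ', partialSups_const_add]

theorem maxBirkhoffSum_succ_sub (n : ℕ) (z : Z) :
    maxBirkhoffSum g f (n + 1) z - maxBirkhoffSum g f n (g z) =
      max (-maxBirkhoffSum g f n (g z)) (f z) := by
  rw [maxBirkhoffSum_succ, ← max_sub_sub_right, zero_sub, add_sub_cancel_right]

variable {g f} {z : Z}

theorem bddAbove_range_birkhoffSum_apply_iff :
    BddAbove (Set.range (birkhoffSum g f · (g z))) ↔
      BddAbove (Set.range (birkhoffSum g f · z)) := by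
  simp only [bddAbove_def, Set.forall_mem_range]
  constructor
  · rintro ⟨B, hB⟩
    refine ⟨max 0 (f z + B), fun n => ?_⟩
    cases n with
    | zero => simp
    | succ n =>
      rw [birkhoffSum_succ']
      exact le_max_of_le_right (by grw [hB n])
  · rintro ⟨B, hB⟩
    refine ⟨B - f z, fun n => ?_⟩
    rw [le_sub_iff_add_le', ← birkhoffSum_succ']
    exact hB (n + 1)

theorem tendsto_maxBirkhoffSum_atTop (h : ¬BddAbove (Set.range (birkhoffSum g f · z))) :
    Tendsto (maxBirkhoffSum g f · z) atTop atTop :=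
  tendsto_atTop_atTop_of_monotone' (monotone_maxBirkhoffSum g f z) <|
    bddAbove_range_partialSups.not.2 h

theorem eventually_birkhoffAverage_lt_of_bddAbove {b c : ℝ} (hbc : b < c)
    (h : BddAbove (Set.range (birkhoffSum g (fun x => f x - b) · z))) :
    ∀ᶠ n in atTop, birkhoffAverage ℝ g f n z < c := by
  obtain ⟨B, hB⟩ := h
  have bound_tendsto : Tendsto (fun n : ℕ => b + B / n) atTop (𝓝 b) := by
    simpa using (tendsto_const_div_atTop_nhds_zero_nat B).const_add b
  filter_upwards [bound_tendsto.eventually_lt_const hbc, eventually_gt_atTop 0] with n hnc hn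
  have sum_le : birkhoffSum g f n z - n * b ≤ B := by
    simpa [birkhoffSum] using hB (Set.mem_range_self n)
  have : (0 : ℝ) < n := Nat.cast_pos.2 hn
  calc birkhoffAverage ℝ g f n z = birkhoffSum g f n z / n := by
        rw [birkhoffAverage, smul_eq_mul, inv_mul_eq_div]
    _ ≤ (n * b + B) / n := by gcongr; linarith
    _ = b + B / n := by field_simp
    _ < c := hnc

end BirkhoffSum

section BirkhoffErgodicTheorem

variable {Z E : Type*} [MeasurableSpace Z] [NormedAddCommGroup E] {g : Z → Z} {μ : Measure Z}

theorem integral_comp_of_measurePreserving [NormedSpace ℝ E] {Y : Type*} [MeasurableSpace Y]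
    {g : Z → Y} {ν : Measure Y} {f : Y → E} (hg : MeasurePreserving g μ ν)
    (hf : AEStronglyMeasurable f ν) : ∫ z, f (g z) ∂μ = ∫ y, f y ∂ν := by
  rw [← integral_map hg.measurable.aemeasurable (hg.map_eq.symm ▸ hf), hg.map_eq]

theorem integrable_birkhoffSum {f : Z → E} (hg : MeasurePreserving g μ μ) (hf : Integrable f μ)
    (n : ℕ) : Integrable (birkhoffSum g f n) μ :=
  integrable_finsetSum _ fun i _ => (hg.iterate i).integrable_comp_of_integrable hf

theorem integrable_birkhoffAverage [NormedSpace ℝ E] {f : Z → E} (hg : MeasurePreserving g μ μ)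
    (hf : Integrable f μ) (n : ℕ) : Integrable (birkhoffAverage ℝ g f n) μ :=
  (integrable_birkhoffSum hg hf n).smul _

theorem integral_birkhoffAverage [NormedSpace ℝ E] {f : Z → E} (hg : MeasurePreserving g μ μ)
    (hf : Integrable f μ) {n : ℕ} (hn : n ≠ 0) :
    ∫ z, birkhoffAverage ℝ g f n z ∂μ = ∫ z, f z ∂μ := by
  have integral_iterate (i : ℕ) : ∫ z, f (g^[i] z) ∂μ = ∫ z, f z ∂μ :=
    integral_comp_of_measurePreserving (hg.iterate i) hf.aestronglyMeasurable
  have integrable_iterate (i : ℕ) : Integrable (fun z => f (g^[i] z)) μ :=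
    (hg.iterate i).integrable_comp_of_integrable hf
  simp only [birkhoffAverage, birkhoffSum]
  rw [integral_smul, integral_finsetSum _ fun i _ => integrable_iterate i]
  simp only [integral_iterate, Finset.sum_const, Finset.card_range]
  rw [← Nat.cast_smul_eq_nsmul ℝ, inv_smul_smul₀ (Nat.cast_ne_zero.2 hn)]

variable {f : Z → ℝ}

theorem integrable_maxBirkhoffSum (hg : MeasurePreserving g μ μ) (hf : Integrable f μ) (n : ℕ) :
    Integrable (maxBirkhoffSum g f n) μ := by
  induction n with
  | zero => simpa only [maxBirkhoffSum_zero] using integrable_zero _ _ _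
  | succ n ih =>
    rw [funext (maxBirkhoffSum_succ g f n)]
    exact (integrable_zero _ _ _).sup (hf.add (hg.integrable_comp_of_integrable ih))

theorem tendsto_integral_maxBirkhoffSum_sub (hg : MeasurePreserving g μ μ) (hf : Integrable f μ)
    (h : ∀ᵐ z ∂μ, ¬BddAbove (Set.range (birkhoffSum g f · z))) :
    Tendsto (fun n => ∫ z, (maxBirkhoffSum g f (n + 1) z - maxBirkhoffSum g f n (g z)) ∂μ) atTop
      (𝓝 (∫ z, f z ∂μ)) := by
  simp only [maxBirkhoffSum_succ_sub]
  refine tendsto_integral_of_dominated_convergence (fun z => |f z|) (fun n => ?_) hf.abs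
    (fun n => .of_forall fun z => ?_) ?_
  · exact ((hg.integrable_comp_of_integrable
      (integrable_maxBirkhoffSum hg hf n)).neg.sup hf).aestronglyMeasurable
  · have := maxBirkhoffSum_nonneg g f n (g z)
    rw [Real.norm_eq_abs, abs_le]
    exact ⟨le_max_of_le_right (neg_abs_le _),
      max_le (by linarith [abs_nonneg (f z)]) (le_abs_self _)⟩
  · filter_upwards [h] with z hz
    have unbounded := tendsto_maxBirkhoffSum_atTop (bddAbove_range_birkhoffSum_apply_iff.not.2 hz)
    refine tendsto_const_nhds.congr' ?_
    filter_upwards [unbounded.eventually_ge_atTop (-f z)] with n hn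
    rw [max_eq_right (by linarith)]

-- With `Mₙ = maxBirkhoffSum g f n`, invariance turns `∫ (Mₙ₊₁ - Mₙ ∘ g)` into `∫ (Mₙ₊₁ - Mₙ) ≥ 0`.
theorem integral_nonneg_of_ae_not_bddAbove_birkhoffSum (hg : MeasurePreserving g μ μ)
    (hf : Integrable f μ) (h : ∀ᵐ z ∂μ, ¬BddAbove (Set.range (birkhoffSum g f · z))) :
    0 ≤ ∫ z, f z ∂μ := by
  refine ge_of_tendsto' (tendsto_integral_maxBirkhoffSum_sub hg hf h) fun n => ?_
  have integrable_max := integrable_maxBirkhoffSum hg hf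
  have integrable_max_comp : Integrable (fun z => maxBirkhoffSum g f n (g z)) μ :=
    hg.integrable_comp_of_integrable (integrable_max n)
  rw [integral_sub (integrable_max _) integrable_max_comp,
    integral_comp_of_measurePreserving hg (integrable_max n).aestronglyMeasurable, sub_nonneg]
  exact integral_mono (integrable_max _) (integrable_max _) fun z =>
    monotone_maxBirkhoffSum g f z n.le_succ

theorem ae_bddAbove_birkhoffSum_of_integral_neg (hg : Ergodic g μ) (hf : Integrable f μ)
    (hneg : ∫ z, f z ∂μ < 0) : ∀ᵐ z ∂μ, BddAbove (Set.range (birkhoffSum g f · z)) := by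
  have measurable_bdd : NullMeasurableSet {z | BddAbove (Set.range (birkhoffSum g f · z))} μ :=
    (aemeasurable_pi_lambda (fun z n => birkhoffSum g f n z) fun n =>
      (integrable_birkhoffSum hg.toMeasurePreserving hf n).aemeasurable).nullMeasurable
        (measurableSet_bddAbove_range measurable_pi_apply)
  have invariant_bdd : g ⁻¹' {z | BddAbove (Set.range (birkhoffSum g f · z))} =
      {z | BddAbove (Set.range (birkhoffSum g f · z))} :=
    Set.ext fun _ => bddAbove_range_birkhoffSum_apply_iff
  have zero_one := hg.quasiErgodic.ae_mem_or_ae_notMem₀ measurable_bdd invariant_bdd.eventuallyEq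
  refine zero_one.resolve_right fun h => ?_
  exact hneg.not_ge (integral_nonneg_of_ae_not_bddAbove_birkhoffSum hg.toMeasurePreserving hf h)

variable [IsProbabilityMeasure μ]

theorem ae_forall_eventually_birkhoffAverage_lt (hg : Ergodic g μ) (hf : Integrable f μ) :
    ∀ᵐ z ∂μ, ∀ c > ∫ x, f x ∂μ, ∀ᶠ n in atTop, birkhoffAverage ℝ g f n z < c := by
  have bdd : ∀ᵐ z ∂μ, ∀ q : ℚ, ∫ x, f x ∂μ < q →
      BddAbove (Set.range (birkhoffSum g (fun x => f x - q) · z)) := by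
    refine ae_all_iff.2 fun q => Filter.eventually_imp_distrib_left.2 fun hq => ?_
    refine ae_bddAbove_birkhoffSum_of_integral_neg hg (hf.sub (integrable_const _)) ?_
    simpa [integral_sub hf (integrable_const _)] using hq
  filter_upwards [bdd] with z hz c hc
  obtain ⟨q, hq, hqc⟩ := exists_rat_btwn hc
  exact eventually_birkhoffAverage_lt_of_bddAbove hqc (hz q hq)

theorem ae_tendsto_birkhoffAverage_real (hg : Ergodic g μ) (hf : Integrable f μ) :
    ∀ᵐ z ∂μ, Tendsto (birkhoffAverage ℝ g f · z) atTop (𝓝 (∫ x, f x ∂μ)) := by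
  filter_upwards [ae_forall_eventually_birkhoffAverage_lt hg hf,
    ae_forall_eventually_birkhoffAverage_lt hg hf.neg] with z upper lower
  refine tendsto_order.2 ⟨fun c hc => ?_, upper⟩
  have := lower (-c) (by simpa [integral_neg] using hc)
  simpa [birkhoffAverage_neg] using this

theorem ae_tendsto_birkhoffAverage [NormedSpace ℝ E] [FiniteDimensional ℝ E] {f : Z → E}
    (hg : Ergodic g μ) (hf : Integrable f μ) :
    ∀ᵐ z ∂μ, Tendsto (birkhoffAverage ℝ g f · z) atTop (𝓝 (∫ x, f x ∂μ)) := by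
  have : CompleteSpace E := FiniteDimensional.complete ℝ E
  let b := Module.finBasis ℝ E
  let coord (i) : E →L[ℝ] ℝ := (b.coord i).toContinuousLinearMap
  have coord_tendsto : ∀ᵐ z ∂μ, ∀ i,
      Tendsto (birkhoffAverage ℝ g (coord i ∘ f) · z) atTop (𝓝 (∫ x, coord i (f x) ∂μ)) :=
    ae_all_iff.2 fun i => ae_tendsto_birkhoffAverage_real hg ((coord i).integrable_comp hf)
  filter_upwards [coord_tendsto] with z hz
  refine (tendsto_nhds_iff_forall_coord b).2 fun i => ?_
  rw [← LinearMap.coe_toContinuousLinearMap' (b.coord i), ← (coord i).integral_comp_comm hf]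
  simpa only [map_birkhoffAverage ℝ ℝ] using hz i

end BirkhoffErgodicTheorem

section ProbabilityMeasure

variable {Z : Type*} [TopologicalSpace Z] [MeasurableSpace Z]

theorem isClosed_setOf_measurePreserving [BorelSpace Z] [HasOuterApproxClosed Z] {g : Z → Z}
    (hg : Continuous g) :
    IsClosed {μ : ProbabilityMeasure Z | MeasurePreserving g (μ : Measure Z) μ} := by
  have fixed_points : {μ : ProbabilityMeasure Z | MeasurePreserving g (μ : Measure Z) μ} =
      {μ | μ.map hg.measurable.aemeasurable = μ} := by
    ext μ
    exact ⟨fun h => Subtype.ext h.map_eq, fun h => ⟨hg.measurable, congrArg Subtype.val h⟩⟩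
  rw [fixed_points]
  exact isClosed_eq (ProbabilityMeasure.continuous_map hg) continuous_id

variable [CompactSpace Z]

theorem integrable_of_continuous [OpensMeasurableSpace Z] {E : Type*} [NormedAddCommGroup E]
    {f : Z → E} (hf : Continuous f) (μ : Measure Z) [IsFiniteMeasureOnCompacts μ] :
    Integrable f μ :=
  hf.integrable_of_hasCompactSupport (.of_compactSpace f)

theorem continuous_integral_probabilityMeasure [OpensMeasurableSpace Z] {E : Type*}
    [NormedAddCommGroup E] [NormedSpace ℝ E] [FiniteDimensional ℝ E] {f : Z → E}
    (hf : Continuous f) :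
    Continuous fun μ : ProbabilityMeasure Z => ∫ z, f z ∂(μ : Measure Z) := by
  have : CompleteSpace E := FiniteDimensional.complete ℝ E
  let b := Module.finBasis ℝ E
  let coord (i) : C(E, ℝ) := (b.coord i).toContinuousLinearMap
  have coord_integral (μ : ProbabilityMeasure Z) (i) :
      b.coord i (∫ z, f z ∂(μ : Measure Z)) = ∫ z, b.coord i (f z) ∂(μ : Measure Z) :=
    ((b.coord i).toContinuousLinearMap.integral_comp_comm (integrable_of_continuous hf _)).symm
  refine continuous_iff_continuousAt.2 fun μ => (tendsto_nhds_iff_forall_coord b).2 fun i => ?_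
  simp only [coord_integral]
  exact (ProbabilityMeasure.continuous_integral_continuousMap
    ((coord i).comp ⟨f, hf⟩)).continuousAt

theorem integral_smul_add_smul_of_continuous [OpensMeasurableSpace Z] {E : Type*}
    [NormedAddCommGroup E] [NormedSpace ℝ E] {f : Z → E} (hf : Continuous f) (μ ν : Measure Z)
    [IsFiniteMeasureOnCompacts μ] [IsFiniteMeasureOnCompacts ν] (a b : NNReal) :
    ∫ z, f z ∂(a • μ + b • ν) = a • ∫ z, f z ∂μ + b • ∫ z, f z ∂ν := by
  rw [integral_add_measure (integrable_of_continuous hf μ).smul_measure_nnreal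
    (integrable_of_continuous hf ν).smul_measure_nnreal, integral_smul_nnreal_measure,
    integral_smul_nnreal_measure]

-- Krein–Milman, applied after embedding the measures into the locally convex space `C(Z, ℝ) → ℝ`.
theorem exists_mem_extremePoints_of_isCompact [BorelSpace Z] [HasOuterApproxClosed Z]
    {N : Set (ProbabilityMeasure Z)} (hN : IsCompact N) (hne : N.Nonempty) :
    ∃ μ ∈ N, (μ : Measure Z) ∈ Set.extremePoints ENNReal ((↑) '' N : Set (Measure Z)) := by
  let Φ (μ : ProbabilityMeasure Z) (f : C(Z, ℝ)) : ℝ := ∫ z, f z ∂(μ : Measure Z)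
  have continuous_Φ : Continuous Φ :=
    continuous_pi fun f => ProbabilityMeasure.continuous_integral_continuousMap f
  have injective_Φ : Function.Injective Φ := by
    intro μ ν h
    exact Subtype.ext (ext_of_forall_integral_eq_of_IsFiniteMeasure (μ := (μ : Measure Z))
      (ν := (ν : Measure Z)) fun f => congrFun h f.toContinuousMap)
  obtain ⟨_, ⟨μ, hμ, rfl⟩, extreme⟩ := (hN.image continuous_Φ).extremePoints_nonempty (hne.image Φ)
  refine ⟨μ, hμ, ⟨μ, hμ, rfl⟩, ?_⟩
  rintro _ ⟨ν₁, hν₁, rfl⟩ _ ⟨ν₂, hν₂, rfl⟩ hμ_seg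
  obtain ⟨a, b, ha, hb, hab, hμ_eq⟩ := openSegment_ennreal_subset_nnreal hμ_seg
  have Φ_eq : (a : ℝ) • Φ ν₁ + (b : ℝ) • Φ ν₂ = Φ μ := by
    ext f
    simp only [Φ, ← hμ_eq, integral_smul_add_smul_of_continuous f.continuous]
    rfl
  have Φ_eq_left : Φ ν₁ = Φ μ :=
    extreme ⟨ν₁, hν₁, rfl⟩ ⟨ν₂, hν₂, rfl⟩ ⟨a, b, ha, hb, mod_cast hab, Φ_eq⟩
  rw [injective_Φ Φ_eq_left]

end ProbabilityMeasure

section EmpiricalMeasure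

variable {Z E : Type*} [MeasurableSpace Z]

/-- The uniform probability measure on the orbit segment `z, g z, …, gⁿ⁻¹ z`, counted with
multiplicity. It is the zero measure for `n = 0`. -/
noncomputable def empiricalMeasure (g : Z → Z) (n : ℕ) (z : Z) : Measure Z :=
  (n : ENNReal)⁻¹ • ∑ i ∈ Finset.range n, Measure.dirac (g^[i] z)

theorem isProbabilityMeasure_empiricalMeasure (g : Z → Z) {n : ℕ} (hn : n ≠ 0) (z : Z) :
    IsProbabilityMeasure (empiricalMeasure g n z) := by
  constructor
  simp [empiricalMeasure, ENNReal.inv_mul_cancel, hn]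

theorem integral_empiricalMeasure [TopologicalSpace Z] [OpensMeasurableSpace Z]
    [NormedAddCommGroup E] [NormedSpace ℝ E] [SecondCountableTopology E] [CompleteSpace E]
    {f : Z → E} (hf : Continuous f) (g : Z → Z) (n : ℕ) (z : Z) :
    ∫ x, f x ∂(empiricalMeasure g n z) = birkhoffAverage ℝ g f n z := by
  borelize E
  have hfm : StronglyMeasurable f := hf.stronglyMeasurable
  rw [empiricalMeasure, integral_smul_measure, integral_finsetSum_measure fun i _ =>
    integrable_dirac' hfm (by simp)]
  simp [birkhoffAverage, birkhoffSum, integral_dirac' _ _ hfm]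

variable [TopologicalSpace Z]

theorem tendsto_birkhoffAverage_of_tendsto_empiricalMeasure [CompactSpace Z]
    [OpensMeasurableSpace Z] [NormedAddCommGroup E] [NormedSpace ℝ E] [FiniteDimensional ℝ E]
    {ι : Type*} {l : Filter ι} {g : Z → Z} {r : ι → ℕ} {z : ι → Z} {ν : ι → ProbabilityMeasure Z}
    {μ : ProbabilityMeasure Z} (hν : ∀ᶠ i in l, (ν i : Measure Z) = empiricalMeasure g (r i) (z i))
    (hμ : Tendsto ν l (𝓝 μ)) {f : Z → E} (hf : Continuous f) :
    Tendsto (fun i => birkhoffAverage ℝ g f (r i) (z i)) l (𝓝 (∫ x, f x ∂(μ : Measure Z))) := by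
  have : CompleteSpace E := FiniteDimensional.complete ℝ E
  have : ProperSpace E := FiniteDimensional.proper ℝ E
  refine ((continuous_integral_probabilityMeasure hf).tendsto μ |>.comp hμ).congr' ?_
  filter_upwards [hν] with i hi
  rw [Function.comp_apply, hi, integral_empiricalMeasure hf]

theorem measurePreserving_of_tendsto_birkhoffAverage [HasOuterApproxClosed Z] [BorelSpace Z]
    {ι : Type*} {l : Filter ι} [l.NeBot] {g : Z → Z} (hg : Continuous g) {r : ι → ℕ}
    (hr : Tendsto r l atTop) {z : ι → Z} {μ : Measure Z} [IsFiniteMeasure μ]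
    (h : ∀ f : BoundedContinuousFunction Z ℝ,
      Tendsto (fun i => birkhoffAverage ℝ g f (r i) (z i)) l (𝓝 (∫ x, f x ∂μ))) :
    MeasurePreserving g μ μ := by
  refine ⟨hg.measurable, ext_of_forall_integral_eq_of_IsFiniteMeasure fun f => ?_⟩
  rw [integral_map hg.aemeasurable f.continuous.aestronglyMeasurable]
  have dist_tendsto_zero : Tendsto (fun i => dist (birkhoffAverage ℝ g (f ∘ g) (r i) (z i))
      (birkhoffAverage ℝ g f (r i) (z i))) l (𝓝 0) := by
    refine squeeze_zero (fun _ => dist_nonneg) (fun i => ?_)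
      ((tendsto_const_div_atTop_nhds_zero_nat (2 * ‖f‖)).comp hr)
    rw [birkhoffAverage_comp_self, dist_birkhoffAverage_apply_birkhoffAverage]
    exact div_le_div_of_nonneg_right (f.dist_le_two_norm _ _) (Nat.cast_nonneg _)
  exact tendsto_nhds_unique (h (f.compContinuous ⟨g, hg⟩))
    ((tendsto_iff_of_dist dist_tendsto_zero).2 (h f))

end EmpiricalMeasure

section RotationSet

variable {Z : Type*} {k : ℕ} {g : Z → Z} {φ : Z → Fin k → ℝ}

theorem mem_rotMZ_iff_mapClusterPt {v : Fin k → ℝ} :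
    v ∈ rotMZ g φ ↔
      MapClusterPt v (atTop ×ˢ ⊤) fun p : ℕ × Z => birkhoffAverage ℝ g φ p.1 p.2 := by
  constructor
  · rintro ⟨z, r, hr, hv⟩
    exact .of_comp (hr.prodMk (tendsto_top (f := z))) hv.mapClusterPt
  · intro h
    obtain ⟨p, hv, hp⟩ := h.exists_seq_tendsto
    exact ⟨fun i => (p i).2, fun i => (p i).1, tendsto_fst.comp hp, hv⟩

theorem isClosed_rotMZ : IsClosed (rotMZ g φ) := by
  have rotMZ_eq : rotMZ g φ = {v | ClusterPt v (map (fun p : ℕ × Z => birkhoffAverage ℝ g φ p.1 p.2)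
      (atTop ×ˢ ⊤))} := Set.ext fun _ => mem_rotMZ_iff_mapClusterPt
  rw [rotMZ_eq]
  exact isClosed_setOfPred_clusterPt

variable [TopologicalSpace Z] [CompactSpace Z]

theorem isCompact_rotMZ (hφ : Continuous φ) : IsCompact (rotMZ g φ) := by
  obtain ⟨K, hK, average_mem⟩ := exists_isCompact_forall_birkhoffAverage_mem (g := g) hφ
  refine hK.of_isClosed_subset isClosed_rotMZ ?_
  rintro v ⟨z, r, -, hv⟩
  exact hK.isClosed.mem_of_tendsto hv (.of_forall fun i => average_mem (r i) (z i))

theorem eventually_forall_birkhoffAverage_mem (hφ : Continuous φ) {U : Set (Fin k → ℝ)}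
    (hU : IsOpen U) (hsub : rotMZ g φ ⊆ U) :
    ∀ᶠ n in atTop, ∀ z, birkhoffAverage ℝ g φ n z ∈ U := by
  obtain ⟨K, hK, average_mem⟩ := exists_isCompact_forall_birkhoffAverage_mem (g := g) hφ
  let averages : Filter (Fin k → ℝ) :=
    map (fun p : ℕ × Z => birkhoffAverage ℝ g φ p.1 p.2) (atTop ×ˢ ⊤)
  have averages_le : averages ≤ 𝓟 K :=
    tendsto_principal.2 (.of_forall fun p => average_mem p.1 p.2)
  have mem_averages : U ∈ averages := hK.adherence_nhdset averages_le hU fun v _ hv =>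
    hsub (mem_rotMZ_iff_mapClusterPt.2 hv)
  exact mem_prod_top.1 mem_averages

variable [MeasurableSpace Z]

theorem rotM_subset_convexHull_rotMZ [OpensMeasurableSpace Z] (hφ : Continuous φ) :
    rotM g φ ⊆ convexHull ℝ (rotMZ g φ) := by
  rintro _ ⟨μ, _, hgμ, rfl⟩
  have integrable := integrable_of_continuous hφ μ
  rw [← (isCompact_convexHull (isCompact_rotMZ hφ)).isClosed.closure_eq,
    Metric.closure_eq_iInter_cthickening]
  refine Set.mem_iInter₂.2 fun δ hδ => ?_
  have thickening_subset : Metric.thickening δ (rotMZ g φ) ⊆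
      Metric.cthickening δ (convexHull ℝ (rotMZ g φ)) :=
    (Metric.thickening_subset_of_subset δ (subset_convexHull ℝ _)).trans
      (Metric.thickening_subset_cthickening δ _)
  obtain ⟨n, average_mem, hn⟩ := (eventually_forall_birkhoffAverage_mem (g := g) hφ
    Metric.isOpen_thickening (Metric.self_subset_thickening hδ _)).and (eventually_ne_atTop 0)
    |>.exists
  rw [← integral_birkhoffAverage hgμ integrable hn]
  exact ((convex_convexHull ℝ _).cthickening δ).integral_mem Metric.isClosed_cthickening
    (.of_forall fun z => thickening_subset (average_mem z))
    (integrable_birkhoffAverage hgμ integrable n)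

theorem rotMZ_subset_rotM [T2Space Z] [BorelSpace Z] [HasOuterApproxClosed Z]
    (hg : Continuous g) (hφ : Continuous φ) :
    rotMZ g φ ⊆ rotM g φ := by
  rintro v ⟨z, r, hr, hv⟩
  have empirical : ∀ᶠ i in atTop, ∃ ν : ProbabilityMeasure Z,
      (ν : Measure Z) = empiricalMeasure g (r i) (z i) := by
    filter_upwards [hr.eventually_ne_atTop 0] with i hi
    exact ⟨⟨_, isProbabilityMeasure_empiricalMeasure g hi (z i)⟩, rfl⟩
  obtain ⟨ν, hν⟩ := empirical.choice
  obtain ⟨μ, hμ⟩ := exists_clusterPt_of_compactSpace (map ν atTop)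
  obtain ⟨U, hU, hμ⟩ := mapClusterPt_iff_ultrafilter.1 hμ
  refine ⟨μ, inferInstance, ?_, ?_⟩
  · exact measurePreserving_of_tendsto_birkhoffAverage hg (hr.mono_left hU) fun f =>
      tendsto_birkhoffAverage_of_tendsto_empiricalMeasure (hν.filter_mono hU) hμ f.continuous
  · exact tendsto_nhds_unique
      (tendsto_birkhoffAverage_of_tendsto_empiricalMeasure (hν.filter_mono hU) hμ hφ)
      (hv.mono_left hU)

end RotationSet

section RotationFiber

variable {Z : Type*} [MeasurableSpace Z] {k : ℕ} {g : Z → Z} {φ : Z → Fin k → ℝ} {v : Fin k → ℝ}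

/-- The invariant probability measures with rotation vector `v`, as a subset of the compact space
`ProbabilityMeasure Z`; for extreme `v` they are a face of the set of invariant measures. -/
def rotationFiber (g : Z → Z) (φ : Z → Fin k → ℝ) (v : Fin k → ℝ) : Set (ProbabilityMeasure Z) :=
  {μ | MeasurePreserving g (μ : Measure Z) μ ∧ ∫ z, φ z ∂(μ : Measure Z) = v}

theorem nonempty_rotationFiber (hv : v ∈ rotM g φ) : (rotationFiber g φ v).Nonempty := by
  obtain ⟨μ, hμ, hgμ, hμv⟩ := hv
  exact ⟨⟨μ, hμ⟩, hgμ, hμv⟩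

variable [TopologicalSpace Z] [CompactSpace Z]

theorem isCompact_rotationFiber [T2Space Z] [BorelSpace Z] [HasOuterApproxClosed Z]
    (hg : Continuous g) (hφ : Continuous φ) : IsCompact (rotationFiber g φ v) :=
  ((isClosed_setOf_measurePreserving hg).inter
    (isClosed_singleton.preimage (continuous_integral_probabilityMeasure hφ))).isCompact

theorem isExtreme_rotationFiber [OpensMeasurableSpace Z] (hφ : Continuous φ)
    (hv : v ∈ Set.extremePoints ℝ (rotM g φ)) :
    IsExtreme ENNReal {μ : Measure Z | MeasurePreserving g μ μ ∧ IsProbabilityMeasure μ}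
      ((↑) '' rotationFiber g φ v) := by
  constructor
  · rintro _ ⟨μ, hμ, rfl⟩
    exact ⟨hμ.1, inferInstance⟩
  · rintro μ ⟨hgμ, hμ⟩ ν ⟨hgν, hν⟩ _ ⟨ρ, ⟨-, hρv⟩, rfl⟩ hρ_seg
    obtain ⟨a, b, ha, hb, hab, hρ_eq⟩ := openSegment_ennreal_subset_nnreal hρ_seg
    have integral_eq : (a : ℝ) • ∫ z, φ z ∂μ + (b : ℝ) • ∫ z, φ z ∂ν = v := by
      rw [← hρv, ← hρ_eq, integral_smul_add_smul_of_continuous hφ]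
      rfl
    have integral_eq_left : ∫ z, φ z ∂μ = v :=
      hv.2 ⟨μ, hμ, hgμ, rfl⟩ ⟨ν, hν, hgν, rfl⟩ ⟨a, b, ha, hb, mod_cast hab, integral_eq⟩
    exact ⟨⟨μ, hμ⟩, ⟨hgμ, integral_eq_left⟩, rfl⟩

theorem exists_ergodic_integral_eq [T2Space Z] [BorelSpace Z] [HasOuterApproxClosed Z]
    (hg : Continuous g) (hφ : Continuous φ) (hv : v ∈ Set.extremePoints ℝ (rotM g φ)) :
    ∃ μ : Measure Z, IsProbabilityMeasure μ ∧ Ergodic g μ ∧ ∫ z, φ z ∂μ = v := by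
  obtain ⟨μ, hμ, extreme⟩ := exists_mem_extremePoints_of_isCompact
    (isCompact_rotationFiber hg hφ) (nonempty_rotationFiber hv.1)
  have extreme_invariant :=
    (isExtreme_rotationFiber hφ hv).extremePoints_subset_extremePoints extreme
  exact ⟨μ, inferInstance, .of_mem_extremePoints extreme_invariant, hμ.2⟩

end RotationFiber

theorem mem_extremePoints_rotM_of_mem_extremePoints_convexHull_rotMZ {Z : Type*}
    [TopologicalSpace Z] [CompactSpace Z] [T2Space Z] [MeasurableSpace Z] [BorelSpace Z]
    [HasOuterApproxClosed Z] {k : ℕ} {g : Z → Z} (hg : Continuous g) {φ : Z → Fin k → ℝ}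
    (hφ : Continuous φ) {v : Fin k → ℝ}
    (hv : v ∈ Set.extremePoints ℝ (convexHull ℝ (rotMZ g φ))) :
    v ∈ Set.extremePoints ℝ (rotM g φ) :=
  inter_extremePoints_subset_extremePoints_of_subset (rotM_subset_convexHull_rotMZ hφ)
    ⟨rotMZ_subset_rotM hg hφ (extremePoints_convexHull_subset hv), hv⟩

theorem ae_mem_RecSet {Z : Type*} [TopologicalSpace Z] [SecondCountableTopology Z]
    [MeasurableSpace Z] [OpensMeasurableSpace Z] {g : Z → Z} {μ : Measure Z}
    (hg : Conservative g μ) : ∀ᵐ z ∂μ, z ∈ RecSet g := by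
  filter_upwards [hg.ae_frequently_mem_of_mem_nhds] with z hz
  obtain ⟨r, hr, hrz⟩ := (mapClusterPt_iff_frequently.2 hz).tendsto_subseq
  exact ⟨r, hr.tendsto_atTop, hrz⟩

theorem exists_mem_RecSet_hasAvg {Z : Type*} [TopologicalSpace Z] [SecondCountableTopology Z]
    [MeasurableSpace Z] [OpensMeasurableSpace Z] {k : ℕ} {g : Z → Z} {φ : Z → Fin k → ℝ}
    {μ : Measure Z} [IsProbabilityMeasure μ] (hg : Ergodic g μ) (hφ : Integrable φ μ) :
    ∃ z ∈ RecSet g, hasAvg g φ z (∫ x, φ x ∂μ) :=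
  ((ae_mem_RecSet hg.toMeasurePreserving.conservative).and
    (ae_tendsto_birkhoffAverage hg hφ)).exists

/-- Let `Z` be a compact metric space, `g : Z → Z` continuous and
`φ : Z → ℝ^k` continuous. Every extreme point `v` of the convex hull of the
Misiurewicz–Ziemian rotation set is the rotation vector of some ergodic `g`-invariant
Borel probability measure; in particular some recurrent point of `g` has Birkhoff
average equal to `v`. -/
theorem stmt0 {Z : Type*} [MetricSpace Z] [CompactSpace Z] [MeasurableSpace Z] [BorelSpace Z]
    {k : ℕ} (g : Z → Z) (hg : Continuous g) (φ : Z → Fin k → ℝ) (hφ : Continuous φ)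
    (v : Fin k → ℝ) (hv : v ∈ Set.extremePoints ℝ (convexHull ℝ (rotMZ g φ))) :
    (∃ μ : Measure Z, IsProbabilityMeasure μ ∧ Ergodic g μ ∧ (∫ z, φ z ∂μ) = v) ∧
      ∃ z ∈ RecSet g, hasAvg g φ z v := by
  have hv' := mem_extremePoints_rotM_of_mem_extremePoints_convexHull_rotMZ hg hφ hv
  obtain ⟨μ, hμ, ergodic, rfl⟩ := exists_ergodic_integral_eq hg hφ hv'
  exact ⟨⟨μ, hμ, ergodic, rfl⟩,
    exists_mem_RecSet_hasAvg ergodic (integrable_of_continuous hφ μ)⟩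
end

section
/- Fix an integer n ≥ 1. Let Λ_n be the substitution on the alphabet {0,1,2} defined by 0 ↦ 1, 1 ↦ 2 0^{n+1}, 2 ↦ 2 0^n, and let u ∈ Σ⁺ be the unique fixed point of Λ_n beginning with the digit 2 (so u = lim_{r→∞} Λ_nʳ(2)). Let A_n be the 3×3 matrix with rows (0, n+1, n), (1, 0, 0), (0, 1, 1), and let α ∈ Δ satisfy A_n α = λ α where λ is the spectral radius of A_n (α is the normalized Perron–Frobenius eigenvector of A_n). Then u does not have bounded deviation from α: sup_{r ∈ ℕ} ‖κ_σ(u,r) − r·α‖ = ∞. -/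
open Filter Topology MeasureTheory

/-- The sequence space `Σ⁺ = {0,1,2}^ℕ` (with the product topology). -/
abbrev Seq3 := ℕ → Fin 3

/-- The shift map `σ`. -/
def shift (s : Seq3) : Seq3 := fun n => s (n + 1)

/-- The observable `κ(s) = e_{s₀}`. -/
noncomputable def kappa (s : Seq3) : Fin 3 → ℝ := fun i => if i = s 0 then 1 else 0

/-- The cocycle `κ_σ(s,r) = Σ_{i<r} κ(σⁱ s)`. -/
noncomputable def birk (s : Seq3) (r : ℕ) : Fin 3 → ℝ :=
  ∑ i ∈ Finset.range r, kappa (shift^[i] s)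

/-- The Birkhoff digit frequency of `s` exists and equals `v`. -/
def hasFreq (s : Seq3) (v : Fin 3 → ℝ) : Prop :=
  Tendsto (fun r : ℕ => (r : ℝ)⁻¹ • birk s r) atTop (nhds v)

/-- The lexicographic order on `Σ⁺`. -/
def lexLe (s t : Seq3) : Prop :=
  s = t ∨ ∃ n, (∀ i, i < n → s i = t i) ∧ s n < t n

/-- The set `Max` of maximal sequences. -/
def MaxSet : Set Seq3 := {w | w 0 = 2 ∧ ∀ r : ℕ, lexLe (shift^[r] w) w}

/-- The symbolic β-shift `B(w)`. -/
def BetaShift (w : Seq3) : Set Seq3 := {s | ∀ r : ℕ, lexLe (shift^[r] s) w}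

/-- The digit frequency set `DF(w)`. -/
def DF (w : Seq3) : Set (Fin 3 → ℝ) := {v | ∃ s ∈ BetaShift w, hasFreq s v}

/-- The Misiurewicz–Ziemian digit frequency set `DF_MZ(X)` of a subset `X ⊆ Σ⁺`. -/
def DFMZ (X : Set Seq3) : Set (Fin 3 → ℝ) :=
  {v | ∃ (s : ℕ → Seq3) (r : ℕ → ℕ), (∀ i, s i ∈ X) ∧ Tendsto r atTop atTop ∧
    Tendsto (fun i => (r i : ℝ)⁻¹ • birk (s i) (r i)) atTop (nhds v)}

/-- The standard 2-simplex `Δ ⊆ ℝ³`. -/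
def Delta : Set (Fin 3 → ℝ) := {α | (∀ i, 0 ≤ α i) ∧ α 0 + α 1 + α 2 = 1}

/-- `Δ' = {α ∈ Δ : α₂ > 0}`. -/
def Delta' : Set (Fin 3 → ℝ) := {α | α ∈ Delta ∧ 0 < α 2}

/-- `I` is the infimax sequence of `α`: the infimum, in the lexicographic order, of the
(nonempty) set of maximal sequences with digit frequency `α`; it belongs to `Max`. -/
def IsInfimax (α : Fin 3 → ℝ) (I : Seq3) : Prop :=
  {w | w ∈ MaxSet ∧ hasFreq w α}.Nonempty ∧ I ∈ MaxSet ∧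
    (∀ w, w ∈ MaxSet ∧ hasFreq w α → lexLe I w) ∧
    (∀ b : Seq3, (∀ w, w ∈ MaxSet ∧ hasFreq w α → lexLe b w) → lexLe b I)

/-- The closure of the forward `σ`-orbit of `s` (e.g. `C_α` is `orbitClosure I(α)`). -/
def orbitClosure (s : Seq3) : Set Seq3 := closure {t | ∃ r : ℕ, shift^[r] s = t}

/-- A vector in `ℝ³` is rational if all its coordinates are. -/
def IsRat (v : Fin 3 → ℝ) : Prop := ∀ i, ∃ q : ℚ, v i = (q : ℝ)

/-- A minimal set of a continuous map: a nonempty compact invariant set in which every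
point has dense forward orbit. -/
def IsMinimalSet {X : Type*} [TopologicalSpace X] (f : X → X) (C : Set X) : Prop :=
  C.Nonempty ∧ IsCompact C ∧ Set.MapsTo f C C ∧
    ∀ x ∈ C, C ⊆ closure {y | ∃ n : ℕ, f^[n] x = y}

/-- The substitution `Λ_n` on `{0,1,2}`: `0 ↦ 1`, `1 ↦ 2 0^{n+1}`, `2 ↦ 2 0^n`. -/
def subst (n : ℕ) (d : Fin 3) : List (Fin 3) :=
  if d = 0 then [1]
  else if d = 1 then 2 :: List.replicate (n + 1) 0
  else 2 :: List.replicate n 0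

/-- `Λ_n` applied to a finite word. -/
def substWord (n : ℕ) (w : List (Fin 3)) : List (Fin 3) := w.flatMap (subst n)

/-!
The abelianization of `Λ_n` has a left eigenvector `l` for an eigenvalue `m < -1`. Weighing each
digit `d` by `l d`, the prefix `Λ_nᵏ(2)` of `u` has total weight `mᵏ * l 2`, which is unbounded and
alternates in sign. Bounded deviation from `α` would keep this weight within bounded distance of
`r * (l ⬝ᵥ α)`, where `r` is the length of the prefix; but that number never changes sign as `k`
varies.
-/

/-- `l` is a left eigenvector, for the eigenvalue `m`, of the abelianization of the substitution
`θ`, whose `(e, d)` entry counts the occurrences of `e` in `θ d`. It is encoded without the matrix: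
the word `θ d` has `l`-weight `m * l d`. The zero vector is not excluded. -/
def IsLeftEigenvector {ι R : Type*} [Semiring R] (θ : ι → List ι) (l : ι → R) (m : R) : Prop :=
  ∀ d, ((θ d).map l).sum = m * l d

/-- The finite word `w` is a prefix of the infinite word `u`. -/
def IsWordPrefix {ι : Type*} (w : List ι) (u : ℕ → ι) : Prop :=
  ∀ i, ∀ h : i < w.length, u i = w.get ⟨i, h⟩

namespace IsLeftEigenvector

variable {ι R : Type*} [Semiring R] {θ : ι → List ι} {l : ι → R} {m : R}

lemma sum_map_flatMap (hl : IsLeftEigenvector θ l m) (w : List ι) :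
    ((w.flatMap θ).map l).sum = m * (w.map l).sum := by
  induction w with
  | nil => simp
  | cons d w ih => simp [ih, hl d, mul_add]

lemma sum_map_iterate_flatMap (hl : IsLeftEigenvector θ l m) (k : ℕ) (w : List ι) :
    (((fun v => v.flatMap θ)^[k] w).map l).sum = m ^ k * (w.map l).sum := by
  induction k with
  | zero => simp
  | succ k ih => rw [Function.iterate_succ_apply', hl.sum_map_flatMap, ih, pow_succ', mul_assoc]

end IsLeftEigenvector

lemma IsWordPrefix.sum_range_length {ι M : Type*} [AddCommMonoid M] {w : List ι} {u : ℕ → ι}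
    (hw : IsWordPrefix w u) (l : ι → M) :
    ∑ i ∈ Finset.range w.length, l (u i) = (w.map l).sum := by
  rw [Finset.sum_range, ← Fin.sum_univ_fun_getElem]
  exact Finset.sum_congr rfl fun i _ => congrArg l (hw i i.isLt)

lemma iterate_shift_apply (i : ℕ) (s : Seq3) (j : ℕ) : (shift^[i] s) j = s (j + i) := by
  induction i generalizing s with
  | zero => rfl
  | succ _ ih => exact ih (shift s)

lemma dotProduct_kappa (l : Fin 3 → ℝ) (s : Seq3) : l ⬝ᵥ kappa s = l (s 0) := by
  simp [dotProduct, kappa]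

lemma dotProduct_birk (l : Fin 3 → ℝ) (s : Seq3) (r : ℕ) :
    l ⬝ᵥ birk s r = ∑ i ∈ Finset.range r, l (s i) := by
  simp only [birk, dotProduct_sum, dotProduct_kappa, iterate_shift_apply, zero_add]

lemma norm_dotProduct_le {ι R : Type*} [Fintype ι] [NonUnitalSeminormedRing R] (l v : ι → R) :
    ‖l ⬝ᵥ v‖ ≤ (∑ j, ‖l j‖) * ‖v‖ := by
  rw [Finset.sum_mul]
  refine norm_sum_le_of_le _ fun j _ => (norm_mul_le _ _).trans ?_
  gcongr
  exact norm_le_pi_norm v j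

section Alternating

variable {R : Type*} [CommRing R] [LinearOrder R] [IsStrictOrderedRing R]

lemma abs_le_abs_sub_mul_of_mul_nonpos {x t N : R} (hxt : x * t ≤ 0) (hN : 0 ≤ N) :
    |x| ≤ |x - N * t| := by
  rw [← sq_le_sq]
  have hcross : N * (x * t) ≤ 0 := mul_nonpos_of_nonneg_of_nonpos hN hxt
  calc x ^ 2 ≤ x ^ 2 - 2 * (N * (x * t)) + (N * t) ^ 2 := by linarith [sq_nonneg (N * t)]
    _ = (x - N * t) ^ 2 := by ring

lemma exists_ge_pow_mul_mul_nonpos {m : R} (hm : m ≤ 0) (c t : R) (j : ℕ) :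
    ∃ k ≥ j, m ^ k * c * t ≤ 0 := by
  rcases le_total (m ^ j * c * t) 0 with hneg | hpos
  · exact ⟨j, le_rfl, hneg⟩
  · refine ⟨j + 1, j.le_succ, ?_⟩
    calc m ^ (j + 1) * c * t = m * (m ^ j * c * t) := by ring
      _ ≤ 0 := mul_nonpos_of_nonpos_of_nonneg hm hpos

lemma exists_lt_abs_pow_mul_sub_mul {K : Type*} [Field K] [LinearOrder K] [IsStrictOrderedRing K]
    [Archimedean K] {m c : K} (hm : m < -1) (hc : c ≠ 0) (t : K) {N : ℕ → K} (hN : ∀ k, 0 ≤ N k)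
    (B : K) : ∃ k, B < |m ^ k * c - N k * t| := by
  have hm_abs : 1 < |m| := lt_abs.mpr (.inr (lt_neg_of_lt_neg hm))
  obtain ⟨j, hj⟩ := pow_unbounded_of_one_lt (B / |c|) hm_abs
  obtain ⟨k, hjk, hk⟩ :=
    exists_ge_pow_mul_mul_nonpos (hm.le.trans (neg_nonpos.mpr zero_le_one)) c t j
  refine ⟨k, ?_⟩
  calc B < |m| ^ j * |c| := (div_lt_iff₀ (abs_pos.mpr hc)).mp hj
    _ ≤ |m| ^ k * |c| := by gcongr; exact hm_abs.le
    _ = |m ^ k * c| := by rw [abs_mul, abs_pow]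
    _ ≤ |m ^ k * c - N k * t| := abs_le_abs_sub_mul_of_mul_nonpos hk (hN k)

end Alternating

theorem not_bddAbove_norm_birk_sub_smul_of_isLeftEigenvector {θ : Fin 3 → List (Fin 3)}
    {l : Fin 3 → ℝ} {m : ℝ} (hl : IsLeftEigenvector θ l m) (hm : m < -1) {w : List (Fin 3)}
    (hw : (w.map l).sum ≠ 0) {u : Seq3}
    (hu : ∀ k, IsWordPrefix ((fun v => v.flatMap θ)^[k] w) u) (α : Fin 3 → ℝ) :
    ¬ BddAbove (Set.range fun r : ℕ => ‖birk u r - (r : ℝ) • α‖) := by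
  rintro ⟨M, hM⟩
  let len (k : ℕ) : ℕ := ((fun v => v.flatMap θ)^[k] w).length
  have hweight (k : ℕ) :
      l ⬝ᵥ (birk u (len k) - (len k : ℝ) • α) = m ^ k * (w.map l).sum - len k * (l ⬝ᵥ α) := by
    rw [dotProduct_sub, dotProduct_smul, smul_eq_mul, dotProduct_birk, (hu k).sum_range_length,
      hl.sum_map_iterate_flatMap]
  obtain ⟨k, hk⟩ := exists_lt_abs_pow_mul_sub_mul hm hw (l ⬝ᵥ α) (fun k => (len k).cast_nonneg)
    ((∑ j, ‖l j‖) * M)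
  rw [← hweight, ← Real.norm_eq_abs] at hk
  have hdev : ‖birk u (len k) - (len k : ℝ) • α‖ ≤ M := hM ⟨len k, rfl⟩
  refine hk.not_ge ((norm_dotProduct_le _ _).trans ?_)
  gcongr

lemma exists_cubic_root_lt_neg_one {t : ℝ} (ht : 0 < t) :
    ∃ m < -1, m ^ 3 - m ^ 2 - (t + 1) * m + 1 = 0 := by
  let p (m : ℝ) : ℝ := m ^ 3 - m ^ 2 - (t + 1) * m + 1
  have hp_left : p (-(t + 1)) < 0 := by
    have : 1 < (t + 1) ^ 3 := one_lt_pow₀ (by linarith) three_ne_zero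
    calc p (-(t + 1)) = 1 - (t + 1) ^ 3 := by ring
      _ < 0 := by linarith
  have hp_right : 0 < p (-1) := by
    calc 0 < t := ht
      _ = p (-1) := by ring
  have hp_cont : Continuous p := by fun_prop
  obtain ⟨m, hm, hroot⟩ :=
    intermediate_value_Ioo (by linarith) hp_cont.continuousOn ⟨hp_left, hp_right⟩
  exact ⟨m, hm.2, hroot⟩

-- Normalized by `l 0 = 1`, the eigenvector equations at the digits 0 and 1 force this `l`; the one
-- at the digit 2 is then the vanishing at `m` of the characteristic polynomial of `A_n`.
lemma isLeftEigenvector_subst {n : ℕ} {m : ℝ} (hm : m ^ 3 - m ^ 2 - (n + 1) * m + 1 = 0) :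
    IsLeftEigenvector (subst n) ![1, m, m ^ 2 - (n + 1)] m := by
  intro d
  fin_cases d
  · simp [subst]
  · simp [subst, sq]
  · have hcubic : m ^ 2 - (n + 1) + n = m * (m ^ 2 - (n + 1)) := by linear_combination -hm
    simpa [subst] using hcubic

lemma sq_sub_ne_zero_of_cubic_root {t m : ℝ} (ht : t ≠ 0)
    (hm : m ^ 3 - m ^ 2 - (t + 1) * m + 1 = 0) : m ^ 2 - (t + 1) ≠ 0 := by
  intro h
  apply ht
  linear_combination (m - 1) * h - hm

theorem stmt5_general (n : ℕ) (hn : 1 ≤ n) (u : Seq3)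
    (hu : ∀ r : ℕ, IsWordPrefix ((substWord n)^[r] [2]) u) (α : Fin 3 → ℝ) :
    ¬ BddAbove (Set.range fun r : ℕ => ‖birk u r - (r : ℝ) • α‖) := by
  have hn_pos : (0 : ℝ) < n := Nat.cast_pos.mpr hn
  obtain ⟨m, hm, hroot⟩ := exists_cubic_root_lt_neg_one hn_pos
  refine not_bddAbove_norm_birk_sub_smul_of_isLeftEigenvector (isLeftEigenvector_subst hroot) hm
    (w := [2]) ?_ hu α
  simpa using sq_sub_ne_zero_of_cubic_root hn_pos.ne' hroot

/-- Let `u = lim_r Λ_nʳ(2)` be the fixed point of the substitution `Λ_n`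
beginning with `2` (equivalently, each `Λ_nʳ(2)` is a prefix of `u`), let `A_n` be the
abelianization of `Λ_n`, and let `α ∈ Δ` be the normalized Perron–Frobenius eigenvector
of `A_n` (eigenvector for the eigenvalue `lam` equal to the spectral radius). Then `u`
does not have bounded deviation from `α`. -/
theorem stmt5 (n : ℕ) (hn : 1 ≤ n) (u : Seq3)
    (hu : ∀ r : ℕ, ∀ i : ℕ, ∀ h : i < ((substWord n)^[r] [2]).length,
      u i = ((substWord n)^[r] [2]).get ⟨i, h⟩)
    (A : Matrix (Fin 3) (Fin 3) ℝ)
    (hA : A = !![0, (n : ℝ) + 1, (n : ℝ); 1, 0, 0; 0, 1, 1])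
    (lam : ℝ) (α : Fin 3 → ℝ) (hα : α ∈ Delta)
    (heig : A.mulVec α = lam • α)
    (hlam : ∀ c ∈ spectrum ℂ (A.map (algebraMap ℝ ℂ)), ‖c‖ ≤ lam) :
    ¬ BddAbove (Set.range fun r : ℕ => ‖birk u r - (r : ℝ) • α‖) :=
  stmt5_general n hn u hu α
end

section
/- For every maximal sequence w ∈ Max, the digit frequency set DF(w) is a nonempty, compact, convex subset of the standard 2-simplex Δ. -/
open Filter Topology MeasureTheory

/-!
A word is strictly below `w` when each of its nonempty suffixes differs from the initial word of
`w` of the same length, and is smaller at the first difference. Such words can be concatenated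
freely, so the midpoint of two of their frequency vectors is again one (repeat each word as often
as the other is long) and the closure of the set of their frequency vectors is convex. Every
`v` in this closure is the frequency of an infinite concatenation of such words, which lies in
`B(w)`: the blocks are introduced so slowly that each is short compared with its predecessors.
Conversely, if `w₀ ≠ 0`, replacing the last nonzero digit of an initial word of a point of `B(w)`
by `0` makes it strictly below `w`, and this does not affect the limiting frequency. So `DF(w)` is
that closure; if `w₀ = 0`, then `B(w)` is a single point.
-/

section MidpointConvexity

lemma ordConnected_of_isClosed_of_midpoint_mem {T : Set ℝ} (hT : IsClosed T)
    (hmid : ∀ a ∈ T, ∀ b ∈ T, midpoint ℝ a b ∈ T) : T.OrdConnected := by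
  refine ⟨fun a ha b hb t ht => ?_⟩
  have below_nonempty : (T ∩ Set.Iic t).Nonempty := ⟨a, ha, ht.1⟩
  have above_nonempty : (T ∩ Set.Ici t).Nonempty := ⟨b, hb, ht.2⟩
  have below_bdd : BddAbove (T ∩ Set.Iic t) := ⟨t, fun _ h => h.2⟩
  have above_bdd : BddBelow (T ∩ Set.Ici t) := ⟨t, fun _ h => h.2⟩
  set p := sSup (T ∩ Set.Iic t)
  set q := sInf (T ∩ Set.Ici t)
  obtain ⟨hpT, hpt : p ≤ t⟩ : p ∈ T ∩ Set.Iic t :=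
    (hT.inter isClosed_Iic).csSup_mem below_nonempty below_bdd
  obtain ⟨hqT, htq : t ≤ q⟩ : q ∈ T ∩ Set.Ici t :=
    (hT.inter isClosed_Ici).csInf_mem above_nonempty above_bdd
  have hpq : midpoint ℝ p q = (p + q) / 2 := by
    rw [midpoint_eq_smul_add, smul_eq_mul, invOf_eq_inv]; ring
  have hmT := hmid p hpT q hqT
  -- The midpoint of the gap `(p, q)` around `t` lies in `T`, so the gap is empty.
  rcases le_total (midpoint ℝ p q) t with hm | hm
  · have : midpoint ℝ p q ≤ p := le_csSup below_bdd ⟨hmT, hm⟩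
    rwa [show t = p by linarith]
  · have : q ≤ midpoint ℝ p q := csInf_le above_bdd ⟨hmT, hm⟩
    rwa [show t = q by linarith]

variable {E : Type*} [AddCommGroup E] [Module ℝ E] [TopologicalSpace E]
  [IsTopologicalAddGroup E] [ContinuousSMul ℝ E] {S : Set E}

lemma convex_of_isClosed_of_midpoint_mem (hS : IsClosed S)
    (hmid : ∀ x ∈ S, ∀ y ∈ S, midpoint ℝ x y ∈ S) : Convex ℝ S := by
  refine convex_iff_segment_subset.2 fun x hx y hy => ?_
  have hT : IsClosed (AffineMap.lineMap (k := ℝ) x y ⁻¹' S) :=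
    hS.preimage AffineMap.lineMap_continuous
  have hconn := ordConnected_of_isClosed_of_midpoint_mem hT fun a ha b hb => by
    rw [Set.mem_preimage, AffineMap.map_midpoint]
    exact hmid _ ha _ hb
  rw [segment_eq_image_lineMap, Set.image_subset_iff]
  exact hconn.out (by simpa using hx) (by simpa using hy)

lemma convex_closure_of_midpoint_mem (hmid : ∀ x ∈ S, ∀ y ∈ S, midpoint ℝ x y ∈ S) :
    Convex ℝ (closure S) := by
  have hcont : Continuous (Function.uncurry (midpoint ℝ : E → E → E)) := by
    simp only [Function.uncurry_def, midpoint_eq_smul_add]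
    fun_prop
  exact convex_of_isClosed_of_midpoint_mem isClosed_closure
    fun x hx y hy => map_mem_closure₂ hcont hx hy hmid

end MidpointConvexity

section Sequences

lemma exists_tendsto_atTop_forall {p : ℕ → ℕ → Prop} (hzero : ∀ n, p 0 n)
    (hev : ∀ k, ∀ᶠ n in atTop, p k n) :
    ∃ φ : ℕ → ℕ, Tendsto φ atTop atTop ∧ ∀ n, p (φ n) n := by
  classical
  refine ⟨fun n => Nat.findGreatest (p · n) n, tendsto_atTop.2 fun k => ?_,
    fun n => Nat.findGreatest_spec (P := (p · n)) (Nat.zero_le n) (hzero n)⟩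
  filter_upwards [hev k, eventually_ge_atTop k] with n hpn hkn
  exact Nat.le_findGreatest hkn hpn

lemma tendsto_sum_range_div_sum_range {x l : ℕ → ℝ} {c : ℝ} (hl : ∀ i, 0 < l i)
    (hsum : Tendsto (fun n => ∑ i ∈ Finset.range n, l i) atTop atTop)
    (hx : Tendsto (fun i => x i / l i) atTop (𝓝 c)) :
    Tendsto (fun n => (∑ i ∈ Finset.range n, x i) / ∑ i ∈ Finset.range n, l i) atTop (𝓝 c) := by
  have hdiff : (fun i => x i - c * l i) =o[atTop] l := by
    rw [Asymptotics.isLittleO_iff_tendsto fun i hi => absurd hi (hl i).ne']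
    have hsub := hx.sub_const c
    rw [sub_self] at hsub
    refine hsub.congr fun i => ?_
    field_simp [(hl i).ne']
  have hlim := (hdiff.sum_range (fun i => (hl i).le) hsum).tendsto_div_nhds_zero.add_const c
  rw [zero_add] at hlim
  refine hlim.congr' ?_
  filter_upwards [hsum.eventually_gt_atTop 0] with n hn
  rw [Finset.sum_sub_distrib, ← Finset.mul_sum]
  field_simp
  ring

end Sequences

section Words

variable {A : Type*}

/-- The word `s₀ s₁ ⋯ sₙ₋₁` formed by the first `n` terms of `s`. -/
def initialWord (s : ℕ → A) (n : ℕ) : List A := (List.range n).map s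

@[simp]
lemma length_initialWord (s : ℕ → A) (n : ℕ) : (initialWord s n).length = n := by
  simp [initialWord]

@[simp]
lemma getElem_initialWord (s : ℕ → A) {n i : ℕ} (hi : i < (initialWord s n).length) :
    (initialWord s n)[i] = s i := by
  simp [initialWord]

lemma initialWord_add (s : ℕ → A) (m n : ℕ) :
    initialWord s (m + n) = initialWord s m ++ initialWord (fun i => s (m + i)) n := by
  simp [initialWord, List.range_add, Function.comp_def]

lemma initialWord_succ (s : ℕ → A) (n : ℕ) : initialWord s (n + 1) = initialWord s n ++ [s n] := by
  simp [initialWord, List.range_succ]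

lemma initialWord_prefix_of_le (s : ℕ → A) {m n : ℕ} (hmn : m ≤ n) :
    initialWord s m <+: initialWord s n := by
  obtain ⟨k, rfl⟩ := Nat.exists_eq_add_of_le hmn
  rw [initialWord_add]
  exact List.prefix_append _ _

lemma eq_initialWord_of_suffix {s : ℕ → A} {n : ℕ} {u : List A} (hu : u <:+ initialWord s n) :
    ∃ r, u = initialWord (fun i => s (r + i)) u.length := by
  obtain ⟨p, hp⟩ := hu
  have hn : n = p.length + u.length := by simpa using (congrArg List.length hp).symm
  rw [hn, initialWord_add] at hp
  exact ⟨p.length, (List.append_inj hp (by simp)).2⟩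

lemma suffix_append_cases {u v x : List A} (hx : x <:+ u ++ v) :
    x <:+ v ∨ ∃ y, y <:+ u ∧ y ≠ [] ∧ x = y ++ v := by
  obtain ⟨p, hp⟩ := hx
  rcases List.append_eq_append_iff.1 hp with ⟨y, rfl, rfl⟩ | ⟨y, -, rfl⟩
  · rcases eq_or_ne y [] with rfl | hy
    · exact Or.inl (by simp)
    · exact Or.inr ⟨y, List.suffix_append _ _, hy, rfl⟩
  · exact Or.inl (List.suffix_append _ _)

lemma eq_replicate_or_eq_append_cons_replicate (z : A) (u : List A) :
    u = List.replicate u.length z ∨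
      ∃ p a k, a ≠ z ∧ u = p ++ a :: List.replicate k z := by
  induction u using List.reverseRecOn with
  | nil => exact Or.inl rfl
  | append_singleton u x ih =>
    rcases ne_or_eq x z with hx | rfl
    · exact Or.inr ⟨u, x, 0, hx, rfl⟩
    rcases ih with hu | ⟨p, a, k, ha, rfl⟩
    · left
      rw [List.length_append, List.length_singleton, List.replicate_succ', ← hu]
    · exact Or.inr ⟨p, a, k + 1, ha, by simp [List.replicate_succ']⟩

lemma exists_initialWord_eq {P : ℕ → List A} (hP : ∀ ⦃j k⦄, j ≤ k → P j <+: P k)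
    (hlen : ∀ j, j ≤ (P j).length) :
    ∃ s : ℕ → A, ∀ j, initialWord s (P j).length = P j := by
  refine ⟨fun i => (P (i + 1))[i]'(hlen (i + 1)), fun j => ?_⟩
  refine List.ext_getElem (by simp) fun i _ hi => ?_
  rw [getElem_initialWord]
  rcases le_total j (i + 1) with hj | hj
  · exact ((hP hj).getElem hi).symm
  · exact (hP hj).getElem _

lemma flatten_mem_of_append_mem {W : Set (List A)} (hW : ∀ u ∈ W, ∀ v ∈ W, u ++ v ∈ W)
    {S : List (List A)} (hne : S ≠ []) (hS : ∀ u ∈ S, u ∈ W) : S.flatten ∈ W := by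
  induction S with
  | nil => exact absurd rfl hne
  | cons u S ih =>
    rcases eq_or_ne S [] with rfl | hS'
    · simpa using hS
    · exact hW u (hS u List.mem_cons_self) _
        (ih hS' fun v hv => hS v (List.mem_cons_of_mem u hv))

lemma le_length_flatten_initialWord {b : ℕ → List A} (hb : ∀ i, b i ≠ []) (j : ℕ) :
    j ≤ (initialWord b j).flatten.length := by
  induction j with
  | zero => exact Nat.zero_le _
  | succ j ih =>
    have := List.length_pos_iff.2 (hb j)
    simp only [initialWord_succ, List.flatten_concat, List.length_append]
    lia

lemma eventually_length_flatten_initialWord_succ_le {b : ℕ → List A} (hb : ∀ i, b i ≠ [])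
    {φ : ℕ → ℕ} (hφ : Tendsto φ atTop atTop) (hφb : ∀ j, φ j * (b j).length ≤ j)
    {a : ℝ} (ha : 1 < a) :
    ∀ᶠ j in atTop, ((initialWord b (j + 1)).flatten.length : ℝ) ≤
      a * (initialWord b j).flatten.length := by
  obtain ⟨M, hM⟩ := exists_nat_ge (a - 1)⁻¹
  filter_upwards [hφ.eventually_ge_atTop M] with j hj
  have one_le : 1 ≤ (a - 1) * φ j := by
    rw [← inv_le_iff_one_le_mul₀' (sub_pos.2 ha)]
    exact hM.trans (Nat.cast_le.2 hj)
  have mul_length_le : (φ j : ℝ) * (b j).length ≤ (initialWord b j).flatten.length := by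
    exact_mod_cast (hφb j).trans (le_length_flatten_initialWord hb j)
  have length_le : ((b j).length : ℝ) ≤ (a - 1) * (initialWord b j).flatten.length :=
    calc ((b j).length : ℝ) ≤ (a - 1) * φ j * (b j).length :=
          le_mul_of_one_le_left (Nat.cast_nonneg _) one_le
      _ = (a - 1) * (φ j * (b j).length) := mul_assoc _ _ _
      _ ≤ (a - 1) * (initialWord b j).flatten.length :=
          mul_le_mul_of_nonneg_left mul_length_le (sub_pos.2 ha).le
  rw [initialWord_succ, List.flatten_concat, List.length_append, Nat.cast_add]
  linarith

end Words

section WordFrequencies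

variable {A : Type*} [DecidableEq A]

/-- The vector of letter frequencies of a finite word; it vanishes on the empty word. -/
noncomputable def wordFreq (u : List A) : A → ℝ := fun a => u.count a / u.length

lemma wordFreq_mem_stdSimplex [Fintype A] {u : List A} (hu : u ≠ []) :
    wordFreq u ∈ stdSimplex ℝ A := by
  refine ⟨fun a => by unfold wordFreq; positivity, ?_⟩
  have hlen : (u.length : ℝ) ≠ 0 := by simpa using hu
  have hcount : ∑ a, u.count a = u.length := by
    simpa using Multiset.sum_count_eq_card (m := (u : Multiset A)) fun a _ => Finset.mem_univ a
  simp only [wordFreq]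
  rw [← Finset.sum_div, ← Nat.cast_sum, hcount, div_self hlen]

lemma wordFreq_append_of_length_eq {u v : List A} (h : u.length = v.length) :
    wordFreq (u ++ v) = midpoint ℝ (wordFreq u) (wordFreq v) := by
  funext a
  rw [midpoint_eq_smul_add]
  simp only [wordFreq, List.count_append, List.length_append, Pi.smul_apply, Pi.add_apply,
    smul_eq_mul, invOf_eq_inv, h]
  push_cast
  rw [← add_div, ← two_mul, div_mul_eq_div_div_swap]
  ring

lemma wordFreq_flatten_replicate {n : ℕ} (hn : n ≠ 0) (u : List A) :
    wordFreq (List.replicate n u).flatten = wordFreq u := by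
  funext a
  simp [wordFreq, List.count_flatten, mul_div_mul_left, hn]

lemma abs_wordFreq_sub_le {u v : List A} (hlen : u.length = v.length) {a : A} {C : ℝ}
    (hcount : |(u.count a : ℝ) - v.count a| ≤ C) :
    |wordFreq u a - wordFreq v a| ≤ C / v.length := by
  rw [wordFreq, wordFreq, hlen, ← sub_div, abs_div, Nat.abs_cast]
  gcongr

lemma monotone_count_initialWord (s : ℕ → A) (a : A) :
    Monotone fun n => ((initialWord s n).count a : ℝ) := fun _ _ hmn =>
  Nat.cast_le.2 ((initialWord_prefix_of_le s hmn).sublist.count_le a)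

lemma tendsto_wordFreq_initialWord_of_subseq {s : ℕ → A} {v : A → ℝ} {c : ℕ → ℕ}
    (hc : Tendsto c atTop atTop)
    (hratio : ∀ a : ℝ, 1 < a → ∀ᶠ j in atTop, (c (j + 1) : ℝ) ≤ a * c j)
    (hlim : Tendsto (fun j => wordFreq (initialWord s (c j))) atTop (𝓝 v)) :
    Tendsto (fun n => wordFreq (initialWord s n)) atTop (𝓝 v) := by
  rw [tendsto_pi_nhds] at hlim ⊢
  intro a
  simp only [wordFreq, length_initialWord] at hlim ⊢
  exact tendsto_div_of_monotone_of_exists_subseq_tendsto_div _ _ (monotone_count_initialWord s a)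
    fun b hb => ⟨c, hratio b hb, hc, hlim a⟩

lemma tendsto_wordFreq_flatten_initialWord {b : ℕ → List A} (hb : ∀ i, b i ≠ []) {v : A → ℝ}
    (hlim : Tendsto (fun i => wordFreq (b i)) atTop (𝓝 v)) :
    Tendsto (fun j => wordFreq (initialWord b j).flatten) atTop (𝓝 v) := by
  have length_eq (j : ℕ) :
      ((initialWord b j).flatten.length : ℝ) = ∑ i ∈ Finset.range j, ((b i).length : ℝ) := by
    induction j with
    | zero => simp [initialWord]
    | succ j ih => simp [initialWord_succ, Finset.sum_range_succ, ← ih]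
  have count_eq (a : A) (j : ℕ) :
      ((initialWord b j).flatten.count a : ℝ) = ∑ i ∈ Finset.range j, ((b i).count a : ℝ) := by
    induction j with
    | zero => simp [initialWord]
    | succ j ih => simp [initialWord_succ, Finset.sum_range_succ, ← ih]
  have hsum : Tendsto (fun j => ∑ i ∈ Finset.range j, ((b i).length : ℝ)) atTop atTop := by
    simp only [← length_eq]
    exact tendsto_natCast_atTop_atTop.comp
      (tendsto_atTop_mono (le_length_flatten_initialWord hb) tendsto_id)
  rw [tendsto_pi_nhds] at hlim ⊢
  intro a
  simp only [wordFreq, length_eq, count_eq]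
  exact tendsto_sum_range_div_sum_range
    (fun i => Nat.cast_pos.2 (List.length_pos_iff.2 (hb i))) hsum (hlim a)

variable {W : Set (List A)} (hW : ∀ u ∈ W, ∀ v ∈ W, u ++ v ∈ W)
include hW

lemma convex_closure_wordFreq : Convex ℝ (closure (wordFreq '' (W \ {[]}))) := by
  refine convex_closure_of_midpoint_mem ?_
  rintro _ ⟨u, ⟨hu, hu₀ : u ≠ []⟩, rfl⟩ _ ⟨v, ⟨hv, hv₀ : v ≠ []⟩, rfl⟩
  have hul : u.length ≠ 0 := by simpa using hu₀
  have hvl : v.length ≠ 0 := by simpa using hv₀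
  have hu' : (List.replicate v.length u).flatten ∈ W :=
    flatten_mem_of_append_mem hW (by simpa using hv₀) fun x hx => List.eq_of_mem_replicate hx ▸ hu
  have hv' : (List.replicate u.length v).flatten ∈ W :=
    flatten_mem_of_append_mem hW (by simpa using hu₀) fun x hx => List.eq_of_mem_replicate hx ▸ hv
  refine ⟨_, ⟨hW _ hu' _ hv', ?_⟩, ?_⟩
  · simp [hu₀, hv₀]
  · rw [wordFreq_append_of_length_eq (by simp [mul_comm]), wordFreq_flatten_replicate hvl,
      wordFreq_flatten_replicate hul]

lemma exists_tendsto_wordFreq_initialWord [Countable A] {v : A → ℝ}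
    (hv : v ∈ closure (wordFreq '' (W \ {[]}))) :
    ∃ s : ℕ → A, (∃ᶠ n in atTop, initialWord s n ∈ W) ∧
      Tendsto (fun n => wordFreq (initialWord s n)) atTop (𝓝 v) := by
  obtain ⟨x, hx, hxv⟩ := mem_closure_iff_seq_limit.1 hv
  choose u hu hux using hx
  obtain ⟨φ, hφ, hφ_le⟩ := exists_tendsto_atTop_forall (p := fun k j => k * (u k).length ≤ j)
    (by simp) fun k => eventually_ge_atTop _
  set b : ℕ → List A := fun j => u (φ j)
  set P : ℕ → List A := fun j => (initialWord b j).flatten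
  have hb (j : ℕ) : b j ≠ [] := (hu (φ j)).2
  have hP_len := le_length_flatten_initialWord hb
  have hP_tendsto : Tendsto (fun j => (P j).length) atTop atTop :=
    tendsto_atTop_mono hP_len tendsto_id
  obtain ⟨s, hs⟩ := exists_initialWord_eq (P := P)
    (fun j k hjk => (initialWord_prefix_of_le b hjk).flatten) hP_len
  refine ⟨s, ?_, tendsto_wordFreq_initialWord_of_subseq hP_tendsto ?_ ?_⟩
  · refine hP_tendsto.frequently (Eventually.frequently ?_)
    filter_upwards [eventually_gt_atTop 0] with j hj
    rw [hs]
    refine flatten_mem_of_append_mem hW (by simpa [initialWord] using hj.ne') fun y hy => ?_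
    obtain ⟨i, -, rfl⟩ := List.mem_map.1 hy
    exact (hu (φ i)).1
  · exact fun a ha => eventually_length_flatten_initialWord_succ_le hb hφ hφ_le ha
  · simp only [hs]
    refine tendsto_wordFreq_flatten_initialWord hb ?_
    simpa only [b, hux] using! hxv.comp hφ

end WordFrequencies

section StrictlyBelow

variable {A : Type*} [LT A]

lemma initialWord_lt_initialWord_iff {s t : ℕ → A} {n : ℕ} :
    initialWord s n < initialWord t n ↔ ∃ m < n, (∀ i < m, s i = t i) ∧ s m < t m := by
  rw [List.lt_iff_exists]
  simp [and_left_comm]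

lemma append_lt_append_of_length_eq {u v : List A} (huv : u < v) (hlen : u.length = v.length)
    (x y : List A) : u ++ x < v ++ y := by
  rw [List.lt_iff_exists] at huv ⊢
  obtain ⟨-, hlt⟩ | ⟨i, hu, hv, heq, hlt⟩ := huv
  · exact absurd hlen hlt.ne
  · refine Or.inr ⟨i, by simp; lia, by simp; lia, fun j hj => ?_, ?_⟩
    · rw [List.getElem_append_left (hj.trans hu), List.getElem_append_left (hj.trans hv)]
      exact heq j hj
    · rwa [List.getElem_append_left hu, List.getElem_append_left hv]

/-- The words which, in the lexicographic order, are strictly dominated by `w` from each of their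
positions on. As the two words compared have equal length, the domination is decided within the
word, whatever follows it. -/
def strictWords (w : ℕ → A) : Set (List A) :=
  {u | ∀ v, v <:+ u → v ≠ [] → v < initialWord w v.length}

lemma append_mem_strictWords {w : ℕ → A} {u v : List A} (hu : u ∈ strictWords w)
    (hv : v ∈ strictWords w) : u ++ v ∈ strictWords w := by
  intro x hx hx₀
  rcases suffix_append_cases hx with hxv | ⟨y, hyu, hy₀, rfl⟩
  · exact hv x hxv hx₀
  · rw [List.length_append, initialWord_add]
    exact append_lt_append_of_length_eq (hu y hyu hy₀) (by simp) _ _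

end StrictlyBelow

section StrictApproximation

variable {A : Type*} [LinearOrder A]

/-- The words which, in the lexicographic order, are weakly dominated by `w` from each of their
positions on. Every word occurring in a point of the `β`-shift of `w` is of this kind. -/
def weakWords (w : ℕ → A) : Set (List A) := {u | ∀ v, v <:+ u → v ≤ initialWord w v.length}

variable [OrderBot A] {w : ℕ → A} (hw : ⊥ < w 0)
include hw

lemma replicate_bot_mem_strictWords (n : ℕ) : List.replicate n ⊥ ∈ strictWords w := by
  intro v hv hv₀
  rw [(List.suffix_replicate_iff.1 hv).2]
  obtain ⟨k, hk⟩ := Nat.exists_eq_succ_of_ne_zero (by simpa using hv₀ : v.length ≠ 0)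
  rw [List.length_replicate, hk, List.replicate_succ, Nat.succ_eq_one_add, initialWord_add]
  exact List.Lex.rel hw

lemma append_replicate_bot_mem_strictWords {p : List A} {a : A} {k : ℕ} (ha : ⊥ < a)
    (hu : p ++ a :: List.replicate k ⊥ ∈ weakWords w) :
    p ++ List.replicate (k + 1) ⊥ ∈ strictWords w := by
  intro x hx hx₀
  rcases suffix_append_cases hx with hx | ⟨y, hy, -, rfl⟩
  · exact replicate_bot_mem_strictWords hw _ x hx hx₀
  · have hlt : y ++ List.replicate (k + 1) ⊥ < y ++ a :: List.replicate k ⊥ :=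
      List.append_left_lt (List.Lex.rel ha)
    exact hlt.trans_le (by simpa using hu _ (List.suffix_append_self_iff.2 hy))

lemma exists_mem_strictWords_abs_count_sub_le_one {u : List A} (hu : u ∈ weakWords w) :
    ∃ v ∈ strictWords w, v.length = u.length ∧
      ∀ a, |(v.count a : ℝ) - u.count a| ≤ 1 := by
  rcases eq_replicate_or_eq_append_cons_replicate ⊥ u with hrep | ⟨p, x, k, hx, rfl⟩
  · exact ⟨u, hrep ▸ replicate_bot_mem_strictWords hw _, rfl, by simp⟩
  · refine ⟨_, append_replicate_bot_mem_strictWords hw (bot_lt_iff_ne_bot.2 hx) hu, by simp,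
      fun a => ?_⟩
    simp only [List.replicate_succ, List.count_append, List.count_cons]
    push_cast
    split_ifs <;> simp

end StrictApproximation

section BetaShifts

lemma iterate_shift (r : ℕ) (s : Seq3) : shift^[r] s = fun i => s (r + i) := by
  induction r generalizing s with
  | zero => simp
  | succ r ih =>
    rw [Function.iterate_succ_apply, ih]
    funext i
    exact congrArg s (by lia)

lemma inv_smul_birk (s : Seq3) (n : ℕ) : (n : ℝ)⁻¹ • birk s n = wordFreq (initialWord s n) := by
  have birk_apply (a : Fin 3) : birk s n a = (initialWord s n).count a := by
    induction n with
    | zero => simp [birk, initialWord]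
    | succ n ih =>
      rw [initialWord_succ, List.count_append, Nat.cast_add, ← ih, birk, Finset.sum_range_succ,
        Pi.add_apply, ← birk]
      simp [kappa, iterate_shift, List.count_singleton, @eq_comm _ a]
  funext a
  rw [Pi.smul_apply, birk_apply, smul_eq_mul, wordFreq, length_initialWord, inv_mul_eq_div]

lemma hasFreq_iff {s : Seq3} {v : Fin 3 → ℝ} :
    hasFreq s v ↔ Tendsto (fun n => wordFreq (initialWord s n)) atTop (𝓝 v) := by
  simp only [hasFreq, inv_smul_birk]

lemma initialWord_le_of_lexLe {s t : Seq3} (hst : lexLe s t) (n : ℕ) :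
    initialWord s n ≤ initialWord t n := by
  rcases hst with rfl | ⟨m, heq, hlt⟩
  · exact le_rfl
  rcases lt_or_ge m n with hmn | hnm
  · exact (initialWord_lt_initialWord_iff.2 ⟨m, hmn, heq, hlt⟩).le
  · exact (List.map_congr_left fun i hi => heq i ((List.mem_range.1 hi).trans_le hnm)).le

lemma initialWord_mem_weakWords {w s : Seq3} (hs : s ∈ BetaShift w) (n : ℕ) :
    initialWord s n ∈ weakWords w := by
  intro v hv
  obtain ⟨r, hr⟩ := eq_initialWord_of_suffix hv
  rw [hr, length_initialWord, ← iterate_shift]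
  exact initialWord_le_of_lexLe (hs r) _

lemma mem_betaShift_of_frequently_mem_strictWords {w s : Seq3}
    (hs : ∃ᶠ n in atTop, initialWord s n ∈ strictWords w) : s ∈ BetaShift w := by
  intro r
  obtain ⟨n, hn, hsn⟩ := frequently_atTop.1 hs (r + 1)
  obtain ⟨k, rfl⟩ := Nat.exists_eq_add_of_le (Nat.le_of_succ_le hn)
  rw [initialWord_add, ← iterate_shift] at hsn
  have hlt := hsn _ (List.suffix_append _ _) (List.ne_nil_of_length_pos (by simp; lia))
  rw [length_initialWord, initialWord_lt_initialWord_iff] at hlt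
  obtain ⟨m, -, hm⟩ := hlt
  exact Or.inr ⟨m, hm⟩

lemma DF_subset_closure_wordFreq_strictWords {w : Seq3} (hw : 0 < w 0) :
    DF w ⊆ closure (wordFreq '' (strictWords w \ {[]})) := by
  rintro v ⟨s, hs, hv⟩
  rw [hasFreq_iff] at hv
  choose t ht hlen hcount using fun n =>
    exists_mem_strictWords_abs_count_sub_le_one hw (initialWord_mem_weakWords hs n)
  have hclose (a : Fin 3) :
      Tendsto (fun n => wordFreq (t n) a - wordFreq (initialWord s n) a) atTop (𝓝 0) :=
    squeeze_zero_norm (fun n => by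
      simpa using abs_wordFreq_sub_le (hlen n) (hcount n a)) tendsto_one_div_atTop_nhds_zero_nat
  have ht_tendsto : Tendsto (fun n => wordFreq (t n)) atTop (𝓝 v) := by
    rw [tendsto_pi_nhds] at hv ⊢
    exact fun a => by simpa using (hclose a).add (hv a)
  refine mem_closure_of_tendsto ht_tendsto ?_
  filter_upwards [eventually_gt_atTop 0] with n hn
  exact Set.mem_image_of_mem _ ⟨ht n, List.ne_nil_of_length_pos (by simpa [hlen] using hn)⟩

lemma DF_eq_closure_wordFreq_strictWords {w : Seq3} (hw : 0 < w 0) :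
    DF w = closure (wordFreq '' (strictWords w \ {[]})) := by
  refine (DF_subset_closure_wordFreq_strictWords hw).antisymm fun v hv => ?_
  obtain ⟨s, hs, hlim⟩ :=
    exists_tendsto_wordFreq_initialWord (fun _ hu _ hu' => append_mem_strictWords hu hu') hv
  exact ⟨s, mem_betaShift_of_frequently_mem_strictWords hs, hasFreq_iff.2 hlim⟩

lemma lexLe_zero_left (w : Seq3) : lexLe 0 w := by
  by_cases hw : ∃ n, w n ≠ 0
  · refine Or.inr ⟨Nat.find hw, fun i hi => ?_, Fin.pos_iff_ne_zero.2 (Nat.find_spec hw)⟩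
    exact (not_not.1 (Nat.find_min hw hi)).symm
  · push Not at hw
    exact Or.inl (funext fun n => (hw n).symm)

lemma lexLe.apply_zero_le {s t : Seq3} (hst : lexLe s t) : s 0 ≤ t 0 := by
  rcases hst with rfl | ⟨_ | n, heq, hlt⟩
  · exact le_rfl
  · exact hlt.le
  · exact (heq 0 n.succ_pos).le

lemma zero_mem_betaShift (w : Seq3) : 0 ∈ BetaShift w := fun r => by
  rw [iterate_shift]
  exact lexLe_zero_left w

lemma betaShift_eq_singleton {w : Seq3} (hw : w 0 = 0) : BetaShift w = {0} := by
  refine Set.eq_singleton_iff_unique_mem.2 ⟨zero_mem_betaShift w, fun s hs => funext fun r => ?_⟩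
  simpa [iterate_shift, hw] using (hs r).apply_zero_le

lemma hasFreq_zero : hasFreq 0 (wordFreq [0]) := by
  rw [hasFreq_iff]
  refine tendsto_const_nhds.congr' ?_
  filter_upwards [eventually_ne_atTop 0] with n hn
  rw [← wordFreq_flatten_replicate hn]
  simp [initialWord, Pi.zero_def]

lemma DF_nonempty (w : Seq3) : (DF w).Nonempty :=
  ⟨wordFreq [0], 0, zero_mem_betaShift w, hasFreq_zero⟩

lemma DF_eq_singleton {w : Seq3} (hw : w 0 = 0) : DF w = {wordFreq [0]} := by
  refine Set.eq_singleton_iff_unique_mem.2 ⟨?_, ?_⟩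
  · exact ⟨0, zero_mem_betaShift w, hasFreq_zero⟩
  · rintro v ⟨s, hs, hv⟩
    rw [betaShift_eq_singleton hw, Set.mem_singleton_iff] at hs
    exact tendsto_nhds_unique (hs ▸ hv) hasFreq_zero

lemma delta_eq_stdSimplex : Delta = stdSimplex ℝ (Fin 3) := by
  ext α
  simp [Delta, stdSimplex, Fin.sum_univ_three]

lemma DF_subset_delta (w : Seq3) : DF w ⊆ Delta := by
  rintro v ⟨s, -, hv⟩
  rw [delta_eq_stdSimplex]
  refine (isClosed_stdSimplex ℝ (Fin 3)).mem_of_tendsto (hasFreq_iff.1 hv) ?_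
  filter_upwards [eventually_gt_atTop 0] with n hn
  exact wordFreq_mem_stdSimplex (List.ne_nil_of_length_pos (by simpa using hn))

lemma isClosed_DF (w : Seq3) : IsClosed (DF w) := by
  rcases eq_or_ne (w 0) 0 with hw | hw
  · rw [DF_eq_singleton hw]
    exact isClosed_singleton
  · rw [DF_eq_closure_wordFreq_strictWords (Fin.pos_iff_ne_zero.2 hw)]
    exact isClosed_closure

lemma convex_DF (w : Seq3) : Convex ℝ (DF w) := by
  rcases eq_or_ne (w 0) 0 with hw | hw
  · rw [DF_eq_singleton hw]
    exact convex_singleton _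
  · rw [DF_eq_closure_wordFreq_strictWords (Fin.pos_iff_ne_zero.2 hw)]
    exact convex_closure_wordFreq fun _ hu _ hu' => append_mem_strictWords hu hu'

lemma isCompact_DF (w : Seq3) : IsCompact (DF w) :=
  (isCompact_stdSimplex ℝ (Fin 3)).of_isClosed_subset (isClosed_DF w)
    (delta_eq_stdSimplex ▸ DF_subset_delta w)

end BetaShifts

theorem stmt6_general (w : Seq3) :
    (DF w).Nonempty ∧ IsCompact (DF w) ∧ Convex ℝ (DF w) ∧ DF w ⊆ Delta :=
  ⟨DF_nonempty w, isCompact_DF w, convex_DF w, DF_subset_delta w⟩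

/-- For every maximal sequence `w`, the digit frequency set `DF(w)` is a
nonempty, compact, convex subset of the standard 2-simplex `Δ`. -/
theorem stmt6 (w : Seq3) (hw : w ∈ MaxSet) :
    (DF w).Nonempty ∧ IsCompact (DF w) ∧ Convex ℝ (DF w) ∧ DF w ⊆ Delta :=
  stmt6_general w
end
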